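/- arXiv:0711.2236 — 2 statements merged into one kernel-verified Lean document; each statement's English description precedes it below -/
import Mathlib

section
/- Let M be an n×n Manin matrix over an associative unital (possibly noncommutative) ring R. Then the column determinant of M does not depend on the order of the columns used in its expansion: for every permutation p ∈ S_n one has det^col(M) = Σ_{σ∈S_n} sgn(σ) · M_{σ(p(1)),p(1)} M_{σ(p(2)),p(2)} ⋯ M_{σ(p(n)),p(n)}, where the factors are multiplied in the indicated order. -/
open scoped BigOperators

/-- A matrix `M` over a (possibly noncommutative) ring is a *Manin matrix* if
entries of the same column commute and cross-commutators of 2×2 submatrices are equal. -/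
def Matrix.IsManin {R : Type*} [Ring R] {n m : ℕ} (M : Matrix (Fin n) (Fin m) R) : Prop :=
  (∀ i k : Fin n, ∀ j : Fin m, M i j * M k j = M k j * M i j) ∧
  (∀ i k : Fin n, ∀ j l : Fin m,
    M i j * M k l - M k l * M i j = M k j * M i l - M i l * M k j)

/-- Column determinant: factors multiplied in order of increasing column index. -/
noncomputable def Matrix.detCol {R : Type*} [Ring R] {n : ℕ}
    (M : Matrix (Fin n) (Fin n) R) : R :=
  ∑ σ : Equiv.Perm (Fin n),
    (Equiv.Perm.sign σ : ℤ) • ((List.finRange n).map (fun i => M (σ i) i)).prod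

/-- Row determinant: factors multiplied in order of increasing row index. -/
noncomputable def Matrix.detRow {R : Type*} [Ring R] {n : ℕ}
    (M : Matrix (Fin n) (Fin n) R) : R :=
  ∑ σ : Equiv.Perm (Fin n),
    (Equiv.Perm.sign σ : ℤ) • ((List.finRange n).map (fun i => M i (σ i))).prod

/-- Row permanent: factors multiplied in order of increasing row index. -/
noncomputable def Matrix.permRow {R : Type*} [Ring R] {n : ℕ}
    (M : Matrix (Fin n) (Fin n) R) : R :=
  ∑ σ : Equiv.Perm (Fin n), ((List.finRange n).map (fun i => M i (σ i))).prod

/-- The signed sum over permutations in which the factors are multiplied in the order in which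
the columns occur in the list `L`. -/
def Matrix.detColList {R : Type*} [Ring R] {n : ℕ} (M : Matrix (Fin n) (Fin n) R)
    (L : List (Fin n)) : R :=
  ∑ σ : Equiv.Perm (Fin n), (Equiv.Perm.sign σ : ℤ) • (L.map (fun j => M (σ j) j)).prod

theorem Matrix.map_perm_swap_of_notMem {R : Type*} {n : ℕ} (M : Matrix (Fin n) (Fin n) R)
    (σ : Equiv.Perm (Fin n)) {x y : Fin n} {L : List (Fin n)} (hx : x ∉ L) (hy : y ∉ L) :
    L.map (fun j => M (σ (Equiv.swap x y j)) j) = L.map (fun j => M (σ j) j) := by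
  refine List.map_congr_left fun j hj => ?_
  rw [Equiv.swap_apply_of_ne_of_ne]
  · exact fun h => hx (h ▸ hj)
  · exact fun h => hy (h ▸ hj)

theorem Matrix.IsManin.detColList_swap {R : Type*} [Ring R] {n : ℕ}
    {M : Matrix (Fin n) (Fin n) R} (hM : M.IsManin) (A B : List (Fin n)) (x y : Fin n)
    (h : (A ++ y :: x :: B).Nodup) :
    M.detColList (A ++ y :: x :: B) = M.detColList (A ++ x :: y :: B) := by
  have hyx : y ≠ x := by
    rintro rfl
    simp [List.nodup_append] at h
  have hA : x ∉ A ∧ y ∉ A := by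
    rw [List.nodup_append'] at h
    exact ⟨fun hx => h.2.2 hx (by simp), fun hy => h.2.2 hy (by simp)⟩
  have hB : x ∉ B ∧ y ∉ B := by
    have h' := (List.nodup_append'.1 h).2.1
    simp only [List.nodup_cons, List.mem_cons, not_or] at h'
    exact ⟨h'.2.1, h'.1.2⟩
  rw [← sub_eq_zero, Matrix.detColList, Matrix.detColList, ← Finset.sum_sub_distrib]
  refine Finset.sum_involution (fun σ _ => σ * Equiv.swap x y) ?_ ?_ ?_ ?_
  · intro σ _
    have key := hM.2 (σ y) (σ x) y x
    simp only [List.map_append, List.map_cons, List.prod_append, List.prod_cons,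
      Matrix.map_perm_swap_of_notMem M σ hA.1 hA.2, Matrix.map_perm_swap_of_notMem M σ hB.1 hB.2,
      Equiv.Perm.mul_apply, Equiv.swap_apply_left, Equiv.swap_apply_right, Equiv.Perm.sign_mul,
      Equiv.Perm.sign_swap hyx.symm, mul_neg, mul_one, Units.val_neg, neg_smul]
    rw [← smul_sub, sub_neg_eq_add, add_comm (-_), ← sub_eq_add_neg, ← smul_sub, ← smul_add]
    generalize (A.map fun j => M (σ j) j).prod = a
    generalize (B.map fun j => M (σ j) j).prod = b
    have expand : ∀ s t u v : R, s * t - t * s = u * v - v * u →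
        a * (s * (t * b)) - a * (t * (s * b)) + (a * (v * (u * b)) - a * (u * (v * b))) = 0 := by
      intro s t u v hst
      have : a * (s * (t * b)) - a * (t * (s * b)) + (a * (v * (u * b)) - a * (u * (v * b)))
          = a * ((s * t - t * s) - (u * v - v * u)) * b := by noncomm_ring
      rw [this, hst, sub_self, mul_zero, zero_mul]
    rw [expand _ _ _ _ key, smul_zero]
  · intro σ _ _ hσ
    exact hyx.symm (Equiv.swap_eq_one_iff.1 (mul_eq_left.1 hσ))
  · exact fun σ _ => Finset.mem_univ _
  · intro σ _
    rw [mul_assoc, Equiv.swap_mul_self, mul_one]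

theorem Matrix.IsManin.detColList_append_perm {R : Type*} [Ring R] {n : ℕ}
    {M : Matrix (Fin n) (Fin n) R} (hM : M.IsManin) {L L' : List (Fin n)} (hL : L.Perm L')
    (A : List (Fin n)) (h : (A ++ L).Nodup) :
    M.detColList (A ++ L) = M.detColList (A ++ L') := by
  induction hL generalizing A with
  | nil => rfl
  | cons x _ ih => simpa using ih (A ++ [x]) (by simpa using h)
  | swap x y l => exact hM.detColList_swap A l x y h
  | trans h₁ _ ih₁ ih₂ =>
    exact (ih₁ A h).trans (ih₂ A (((h₁.append_left A).nodup_iff).1 h))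

/-- the column determinant of a Manin matrix does not depend on the
order of the columns used in its expansion. -/
theorem detCol_column_order_independent {R : Type*} [Ring R] {n : ℕ}
    (M : Matrix (Fin n) (Fin n) R) (hM : M.IsManin) (p : Equiv.Perm (Fin n)) :
    M.detCol = ∑ σ : Equiv.Perm (Fin n),
      (Equiv.Perm.sign σ : ℤ) •
        ((List.finRange n).map (fun i => M (σ (p i)) (p i))).prod := by
  have hperm : (List.finRange n).Perm ((List.finRange n).map p) :=
    (List.perm_ext_iff_of_nodup (List.nodup_finRange n)
      ((List.nodup_finRange n).map p.injective)).2 fun j => by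
        simp [p.surjective j]
  have := hM.detColList_append_perm hperm [] (List.nodup_finRange n)
  simpa [Matrix.detColList, Matrix.detCol, Function.comp_def] using this
end

section
/- Newton identities for Manin matrices: let M be an n×n Manin matrix over an associative unital (possibly noncommutative) ring R, and let h_0, …, h_n ∈ R be defined by det^col(t·1_n − M) = Σ_{k=0}^n h_k·t^k in the polynomial ring R[t] with central variable t, with the convention h_k = 0 for k < 0 and k > n. Then for every integer k ≤ n: k·h_k = Σ_{i = max(0,−k)}^{n−k} h_{k+i} · Tr(M^i), where Tr denotes the matrix trace and M^0 = 1_n (in each summand the coefficient h_{k+i} appears on the left of the trace Tr(M^i)). -/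
open scoped BigOperators

namespace Matrix

theorem map_mul_swap_eq {α : Type*} {n m : ℕ} {p q : Fin n} (N : Matrix (Fin n) (Fin m) α) (c : Fin n → Fin m)
    {L : List (Fin n)} (hp : p ∉ L) (hq : q ∉ L) (σ : Equiv.Perm (Fin n)) :
    L.map (fun i => N ((σ * Equiv.swap p q) i) (c i)) = L.map (fun i => N (σ i) (c i)) := by
  refine List.map_congr_left fun i hi => ?_
  rw [Equiv.Perm.mul_apply, Equiv.swap_apply_of_ne_of_ne]
  · rintro rfl; exact hp hi
  · rintro rfl; exact hq hi

section WordDet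

variable {S : Type*} [Ring S] {n m : ℕ}

/-- The signed sum over permutations `σ` of the products of the entries `N (σ i) (c i)`, where `i`
runs through the list `L` in order. -/
def wordDet (N : Matrix (Fin n) (Fin m) S) (c : Fin n → Fin m) (L : List (Fin n)) : S :=
  ∑ σ : Equiv.Perm (Fin n),
    (Equiv.Perm.sign σ : ℤ) • (L.map (fun i => N (σ i) (c i))).prod

theorem sum_sign_smul_eq_zero_of_swap {p q : Fin n} (hpq : p ≠ q)
    (f : Equiv.Perm (Fin n) → S) (hf : ∀ σ, f (σ * Equiv.swap p q) = f σ) :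
    ∑ σ : Equiv.Perm (Fin n), (Equiv.Perm.sign σ : ℤ) • f σ = 0 := by
  refine Finset.sum_involution (fun σ _ => σ * Equiv.swap p q) ?_ ?_ ?_ ?_
  · intro σ _
    simp [hf, Equiv.Perm.sign_swap hpq]
  · intro σ _ _ h
    exact hpq (Equiv.swap_eq_one_iff.mp (mul_eq_left.mp h))
  · simp
  · intro σ _
    simp [mul_assoc]

theorem IsManin.wordDet_swap {N : Matrix (Fin n) (Fin m) S} (hN : N.IsManin)
    (c : Fin n → Fin m) {p q : Fin n} {A B : List (Fin n)} (h : (A ++ p :: q :: B).Nodup) :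
    N.wordDet c (A ++ p :: q :: B) = N.wordDet c (A ++ q :: p :: B) := by
  have hpq : p ≠ q := by grind
  have hpA : p ∉ A := by grind
  have hqA : q ∉ A := by grind
  have hpB : p ∉ B := by grind
  have hqB : q ∉ B := by grind
  rw [← sub_eq_zero, wordDet, wordDet, ← Finset.sum_sub_distrib]
  simp only [← smul_sub]
  refine sum_sign_smul_eq_zero_of_swap hpq _ fun σ => ?_
  have key : ∀ x y z w a b : S, x * y - y * x = z * w - w * z →
      a * (x * (y * b)) - a * (y * (x * b)) = a * (z * (w * b)) - a * (w * (z * b)) := by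
    intro x y z w a b hxy
    calc _ = a * (x * y - y * x) * b := by noncomm_ring
      _ = _ := by rw [hxy]; noncomm_ring
  simp only [List.map_append, List.map_cons, List.prod_append, List.prod_cons,
    map_mul_swap_eq N c hpA hqA, map_mul_swap_eq N c hpB hqB]
  apply key
  simpa using hN.2 (σ q) (σ p) (c p) (c q)

theorem IsManin.wordDet_perm {N : Matrix (Fin n) (Fin m) S} (hN : N.IsManin)
    (c : Fin n → Fin m) {L L' : List (Fin n)} (h : L.Perm L') (hL : L.Nodup) :
    N.wordDet c L = N.wordDet c L' := by
  suffices ∀ A : List (Fin n), (A ++ L).Nodup → N.wordDet c (A ++ L) = N.wordDet c (A ++ L') from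
    this [] hL
  clear hL
  induction h with
  | nil => intros; rfl
  | cons x _ ih =>
    intro A hA
    simpa using ih (A ++ [x]) (by simpa using hA)
  | swap x y l => exact fun A hA => hN.wordDet_swap c hA
  | trans h₁ _ ih₁ ih₂ =>
    exact fun A hA => (ih₁ A hA).trans (ih₂ A (((h₁.append_left A).nodup_iff).mp hA))

theorem IsManin.wordDet_eq_zero {N : Matrix (Fin n) (Fin m) S} (hN : N.IsManin)
    {c : Fin n → Fin m} {p q : Fin n} (hpq : p ≠ q) (hc : c p = c q) {L : List (Fin n)}
    (hL : L.Nodup) (hp : p ∈ L) (hq : q ∈ L) : N.wordDet c L = 0 := by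
  have hq' : q ∈ L.erase p := (List.mem_erase_of_ne hpq.symm).mpr hq
  have hperm : L.Perm (p :: q :: (L.erase p).erase q) :=
    (List.perm_cons_erase hp).trans ((List.perm_cons_erase hq').cons p)
  have hnd := hperm.nodup_iff.mp hL
  rw [hN.wordDet_perm c hperm hL]
  refine sum_sign_smul_eq_zero_of_swap hpq _ fun σ => ?_
  have hpB : p ∉ (L.erase p).erase q := by grind
  have hqB : q ∉ (L.erase p).erase q := by grind
  simp only [List.map_cons, List.prod_cons, map_mul_swap_eq N c hpB hqB]
  rw [← mul_assoc, ← mul_assoc]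
  congr 1
  simpa [hc] using hN.1 (σ q) (σ p) (c q)

/-- The left adjugate: the `(i, j)` entry collects the products in `detCol` with the factor
`N j i` deleted. -/
def adjCol (N : Matrix (Fin n) (Fin n) S) : Matrix (Fin n) (Fin n) S :=
  fun i j => ∑ σ : Equiv.Perm (Fin n), if σ i = j then
    (Equiv.Perm.sign σ : ℤ) • (((List.finRange n).erase i).map (fun k => N (σ k) k)).prod else 0

theorem IsManin.adjCol_mul {N : Matrix (Fin n) (Fin n) S} (hN : N.IsManin) :
    N.adjCol * N = N.detCol • (1 : Matrix (Fin n) (Fin n) S) := by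
  ext i l
  have hnd := List.nodup_finRange n
  have hmem := List.mem_finRange (n := n)
  have hperm : (List.finRange n).Perm ((List.finRange n).erase i ++ [i]) :=
    (List.perm_cons_erase (hmem i)).trans (List.perm_append_singleton _ _).symm
  have hi : i ∉ (List.finRange n).erase i := hnd.not_mem_erase
  have h₁ : (N.adjCol * N) i l =
      N.wordDet (Function.update id i l) ((List.finRange n).erase i ++ [i]) := by
    simp only [mul_apply, adjCol, Finset.sum_mul, ite_mul, zero_mul]
    rw [Finset.sum_comm, wordDet]
    refine Finset.sum_congr rfl fun σ _ => ?_
    have : ((List.finRange n).erase i).map (fun k => N (σ k) (Function.update id i l k)) =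
        ((List.finRange n).erase i).map (fun k => N (σ k) k) := by
      refine List.map_congr_left fun k hk => ?_
      rw [Function.update_of_ne (by rintro rfl; exact hi hk), id]
    simp only [List.map_append, List.prod_append, this]
    simp [mul_assoc]
  rw [h₁, ← hN.wordDet_perm _ hperm hnd]
  by_cases hil : i = l
  · subst hil
    rw [Function.update_eq_self_iff.mpr (by rfl)]
    simp [wordDet, detCol]
  · rw [hN.wordDet_eq_zero hil (by simp [Function.update_of_ne (Ne.symm hil)]) hnd (hmem i)
      (hmem l)]
    simp [hil]

end WordDet

section CharMatrix

open Polynomial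

variable {R : Type*} [Ring R] {n : ℕ}

/-- The matrix `X • 1 - M` over a possibly noncommutative ring. -/
noncomputable abbrev charMat (M : Matrix (Fin n) (Fin n) R) :
    Matrix (Fin n) (Fin n) R[X] :=
  diagonal (fun _ => X) - M.map (fun a => C a)

theorem IsManin.isManin_charMat {M : Matrix (Fin n) (Fin n) R} (hM : M.IsManin) :
    (charMat M).IsManin := by
  have hcomm : ∀ i k j l, M.charMat i j * M.charMat k l - M.charMat k l * M.charMat i j =
      C (M i j * M k l - M k l * M i j) := by
    intro i k j l
    have hd : ∀ (a b : Fin n) (p : R[X]),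
        (diagonal (fun _ : Fin n => (X : R[X]))) a b * p =
          p * (diagonal (fun _ : Fin n => (X : R[X]))) a b := by
      intro a b p
      by_cases hab : a = b <;> simp [hab, X_mul]
    simp only [sub_apply, map_apply, map_sub, C_mul, sub_mul, mul_sub]
    rw [hd i j, hd k l (C _), hd i j (C _)]
    abel
  refine ⟨fun i k j => ?_, fun i k j l => ?_⟩
  · rw [← sub_eq_zero, hcomm, hM.1 i k j, sub_self, C_0]
  · rw [hcomm, hcomm, hM.2]

theorem derivative_list_prod {ι : Type*} [DecidableEq ι] (f : ι → R[X]) (P : ι → Prop)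
    [DecidablePred P] (hf : ∀ i, derivative (f i) = if P i then 1 else 0) {L : List ι}
    (hL : L.Nodup) : derivative (L.map f).prod =
      ∑ i ∈ L.toFinset, if P i then ((L.erase i).map f).prod else 0 := by
  induction L with
  | nil => simp
  | cons a L ih =>
    obtain ⟨ha, hL⟩ := List.nodup_cons.mp hL
    rw [List.map_cons, List.prod_cons, derivative_mul, ih hL, hf, List.toFinset_cons,
      Finset.sum_insert (by simpa using ha), List.erase_cons_head, Finset.mul_sum]
    congr 1
    · simp
    · refine Finset.sum_congr rfl fun i hi => ?_
      have hai : a ≠ i := by rintro rfl; exact ha (by simpa using hi)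
      rw [List.erase_cons_tail (by simpa using hai)]
      simp

theorem derivative_detCol_charMat (M : Matrix (Fin n) (Fin n) R) :
    derivative (charMat M).detCol = (charMat M).adjCol.trace := by
  simp only [detCol, trace, diag_apply, adjCol, derivative_sum]
  rw [Finset.sum_comm]
  refine Finset.sum_congr rfl fun σ _ => ?_
  rw [derivative_smul, derivative_list_prod _ (fun i => σ i = i) ?_ (List.nodup_finRange n),
    Finset.smul_sum]
  · refine Finset.sum_congr (by ext; simp) fun i _ => ?_
    split_ifs <;> simp
  · intro i
    by_cases h : σ i = i <;> simp [h]

theorem coeff_adjCol_charMat (M : Matrix (Fin n) (Fin n) R) (i j : Fin n) :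
    ((charMat M).adjCol i j).coeff n = 0 := by
  refine coeff_eq_zero_of_natDegree_lt ?_
  have hn : 0 < n := i.pos
  refine lt_of_le_of_lt (b := n - 1) ?_ (by omega)
  refine natDegree_sum_le_of_forall_le _ _ fun σ _ => ?_
  split_ifs
  · refine (natDegree_smul_le _ _).trans ((natDegree_list_prod_le _).trans ?_)
    refine (List.sum_le_card_nsmul _ 1 ?_).trans ?_
    · intro d hd
      simp only [List.mem_map, exists_exists_and_eq_and] at hd
      obtain ⟨k, -, rfl⟩ := hd
      by_cases h : σ k = k
      · simpa [h] using natDegree_X_sub_C_le (M k k)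
      · simp [h]
    · simp [List.length_erase_of_mem]
  · simp

/-- The coefficient of `X ^ m` in `X • adjCol (X • 1 - M)`. -/
noncomputable def adjCoeff (M : Matrix (Fin n) (Fin n) R) (m : ℕ) :
    Matrix (Fin n) (Fin n) R :=
  (charMat M).adjCol.map fun p => (p * X).coeff m

theorem adjCoeff_zero (M : Matrix (Fin n) (Fin n) R) : adjCoeff M 0 = 0 := by
  ext; simp [adjCoeff]

theorem adjCoeff_succ_self (M : Matrix (Fin n) (Fin n) R) : adjCoeff M (n + 1) = 0 := by
  ext; simp [adjCoeff, coeff_adjCol_charMat]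

theorem trace_adjCoeff (M : Matrix (Fin n) (Fin n) R) (m : ℕ) :
    (adjCoeff M m).trace = m • (charMat M).detCol.coeff m := by
  cases m with
  | zero => simp [adjCoeff_zero]
  | succ m =>
    have h := congrArg (fun p => coeff p m) (derivative_detCol_charMat M)
    simp only [coeff_derivative] at h
    rw [nsmul_eq_mul, (Nat.cast_commute _ _).eq, Nat.cast_succ, h]
    simp [trace, adjCoeff]

theorem IsManin.adjCoeff_sub {M : Matrix (Fin n) (Fin n) R} (hM : M.IsManin) (m : ℕ) :
    adjCoeff M m - adjCoeff M (m + 1) * M =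
      (charMat M).detCol.coeff m • (1 : Matrix (Fin n) (Fin n) R) := by
  ext i j
  have h : (charMat M).adjCol * diagonal (fun _ => X) - (charMat M).adjCol * M.map (fun a => C a) =
      (charMat M).detCol • (1 : Matrix (Fin n) (Fin n) R[X]) :=
    (mul_sub _ _ _).symm.trans hM.isManin_charMat.adjCol_mul
  have hcoeff := congrArg (fun A => (A i j).coeff m) h
  simp only [sub_apply, mul_diagonal, coeff_sub] at hcoeff
  simp only [mul_apply, map_apply, finsetSum_coeff, coeff_mul_C] at hcoeff
  simp only [adjCoeff, sub_apply, mul_apply, map_apply, coeff_mul_X]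
  rw [hcoeff]
  by_cases hij : i = j <;> simp [hij]

theorem IsManin.sum_coeff_smul_pow {M : Matrix (Fin n) (Fin n) R} (hM : M.IsManin) (m r : ℕ) :
    ∑ i ∈ Finset.range r, (charMat M).detCol.coeff (m + i) • M ^ i =
      adjCoeff M m - adjCoeff M (m + r) * M ^ r := by
  induction r with
  | zero => simp
  | succ r ih =>
    have h := congrArg (· * M ^ r) (hM.adjCoeff_sub (m + r))
    simp only [smul_mul_assoc, one_mul, sub_mul, mul_assoc, ← pow_succ'] at h
    rw [Finset.sum_range_succ, ih, ← h, ← add_assoc]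
    abel

theorem IsManin.sum_coeff_mul_trace {M : Matrix (Fin n) (Fin n) R} (hM : M.IsManin) {m : ℕ}
    (hm : m ≤ n) (p : ℕ) :
    ∑ i ∈ Finset.range (n + 1 - m), (charMat M).detCol.coeff (m + i) * (M ^ (p + i)).trace =
      (adjCoeff M m * M ^ p).trace := by
  have h := hM.sum_coeff_smul_pow m (n + 1 - m)
  rw [Nat.add_sub_cancel' (by omega), adjCoeff_succ_self, zero_mul, sub_zero] at h
  simp only [← h, Finset.sum_mul, smul_mul_assoc, ← pow_add, trace_sum, trace_smul, smul_eq_mul,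
    add_comm p]

end CharMatrix

end Matrix

/-- Newton identities for Manin matrices: with
`detCol (t • 1 - M) = ∑ k, h k * t^k` (and `h k = 0` outside `0 ≤ k ≤ n`), for every
integer `k ≤ n` one has `k • h k = ∑_{i = max(0,-k)}^{n-k} h (k + i) * Tr (M^i)`. -/
theorem newton_identities_manin {R : Type*} [Ring R] {n : ℕ}
    (M : Matrix (Fin n) (Fin n) R) (hM : M.IsManin) (h : ℤ → R)
    (hdef : ∀ j : ℤ, h j = if j < 0 then 0 else
      ((Matrix.diagonal (fun _ : Fin n => (Polynomial.X : Polynomial R)) -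
        M.map (fun a => Polynomial.C a)).detCol).coeff j.toNat) :
    ∀ k : ℤ, k ≤ (n : ℤ) →
      k • h k = ∑ i ∈ Finset.Icc (max 0 (-k)) ((n : ℤ) - k),
        h (k + i) * Matrix.trace (M ^ i.toNat) := by
  intro k hk
  have hcoeff : ∀ m : ℕ, h m = (Matrix.charMat M).detCol.coeff m := fun m => by simp [hdef]
  have hsum : ∑ i ∈ Finset.Icc (max 0 (-k)) ((n : ℤ) - k), h (k + i) * (M ^ i.toNat).trace =
      ∑ i ∈ Finset.range (n + 1 - k.toNat),
        (Matrix.charMat M).detCol.coeff (k.toNat + i) * (M ^ ((-k).toNat + i)).trace := by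
    refine Finset.sum_bij' (fun i _ => i.toNat - (-k).toNat) (fun i _ => ((-k).toNat + i : ℕ))
      ?_ ?_ ?_ ?_ ?_
    · intro i hi; simp only [Finset.mem_Icc, Finset.mem_range] at *; omega
    · intro i hi; simp only [Finset.mem_Icc, Finset.mem_range] at *; omega
    · intro i hi; simp only [Finset.mem_Icc] at *; omega
    · intro i hi; simp only [Finset.mem_range] at *; omega
    · intro i hi
      simp only [Finset.mem_Icc] at hi
      rw [← hcoeff]
      congr 3 <;> omega
  rw [hsum, hM.sum_coeff_mul_trace (by omega)]
  obtain ⟨m, rfl⟩ | hneg : (∃ m : ℕ, k = m) ∨ k < 0 := by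
    rcases lt_or_ge k 0 with hk0 | hk0
    · exact Or.inr hk0
    · exact Or.inl ⟨k.toNat, by omega⟩
  · simp [hcoeff, Matrix.trace_adjCoeff]
  · rw [hdef, if_pos hneg, Int.toNat_of_nonpos hneg.le, Matrix.adjCoeff_zero]
    simp
end
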